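/- Let b > 1 and 0 < β₀ < β_∞ < 1/3 with 1 + β₀ − (b+2)β_∞ ≥ 0. Define for λ ≥ 1 the quantities η_j = λ^{bβ₀ − (b−1)β_∞ − β_j} and μ_j as in the iteration scheme (μ_j = λ^{1−β_j} for j ≥ 2, μ_j = λ^{(1−β₀)(b+1)/(2b) + (b−1)β_∞/2} for j ≤ 1), with β_j = β₀/b^j + (1−1/b^j)β_∞. Then the ratio η_j/μ_j is nonincreasing in j: η_{j'}/μ_{j'} ≤ η_j/μ_j whenever j ≤ j'. -/

import Mathlib

/-!
Put `β₋₁ = b β₀ - (b - 1) β_∞` and write `μ_j = λ ^ m_j`. Then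
`η_j / μ_j = λ ^ (β₋₁ - (m_j + β_j))`, so for `1 ≤ λ` it suffices that `m_j + β_j` is nondecreasing.
It equals `1` for `2 ≤ j`, and it grows from `j = 0` to `j = 1` because `m_0 = m_1` and `β` is
nondecreasing. The passage from `j = 1` to `j = 2` is the only place where
`0 ≤ 1 + β₀ - (b + 2) β_∞` enters: the gap there is `(b - 1) (1 + β₀ - (b + 2) β_∞) / (2 b)`.
-/

section SchemeExponents

/-- The exponents `β_j` of the iteration scheme, moving geometrically from `β_0 = β₀` towards
`β_∞`. -/
noncomputable def schemeBeta (b β0 βinf : ℝ) (j : ℕ) : ℝ :=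
  β0 / b ^ j + (1 - 1 / b ^ j) * βinf

/-- The exponent `m_j` in `μ_j = λ ^ m_j`; the first two stages of the scheme share one value. -/
noncomputable def schemeMuExponent (b β0 βinf : ℝ) (j : ℕ) : ℝ :=
  if 2 ≤ j then 1 - schemeBeta b β0 βinf j
  else (1 - β0) * (b + 1) / (2 * b) + (b - 1) * βinf / 2

variable {b β0 βinf : ℝ}

theorem schemeBeta_eq_sub (b β0 βinf : ℝ) (j : ℕ) :
    schemeBeta b β0 βinf j = βinf - (βinf - β0) / b ^ j := by
  rw [schemeBeta]
  ring

theorem monotone_schemeBeta (hb : 1 ≤ b) (hβ : β0 ≤ βinf) : Monotone (schemeBeta b β0 βinf) := by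
  intro i j hij
  have : 0 ≤ βinf - β0 := sub_nonneg.2 hβ
  simp only [schemeBeta_eq_sub]
  gcongr

theorem schemeMuExponent_zero (b β0 βinf : ℝ) :
    schemeMuExponent b β0 βinf 0 = schemeMuExponent b β0 βinf 1 := by
  simp [schemeMuExponent]

theorem schemeMuExponent_add_schemeBeta_of_two_le (b β0 βinf : ℝ) {j : ℕ} (hj : 2 ≤ j) :
    schemeMuExponent b β0 βinf j + schemeBeta b β0 βinf j = 1 := by
  rw [schemeMuExponent, if_pos hj, sub_add_cancel]

theorem one_sub_schemeMuExponent_one_add_schemeBeta_one (hb : b ≠ 0) (β0 βinf : ℝ) :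
    1 - (schemeMuExponent b β0 βinf 1 + schemeBeta b β0 βinf 1) =
      (b - 1) * (1 + β0 - (b + 2) * βinf) / (2 * b) := by
  rw [schemeMuExponent, if_neg (by norm_num), schemeBeta]
  field_simp
  ring

theorem monotone_schemeMuExponent_add_schemeBeta (hb : 1 ≤ b) (hβ : β0 ≤ βinf)
    (hcond : 0 ≤ 1 + β0 - (b + 2) * βinf) :
    Monotone fun j => schemeMuExponent b β0 βinf j + schemeBeta b β0 βinf j := by
  refine monotone_nat_of_le_succ fun j => ?_
  match j with
  | 0 =>
    rw [schemeMuExponent_zero]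
    gcongr
    exact monotone_schemeBeta hb hβ zero_le_one
  | 1 =>
    have hb_pos : 0 < b := zero_lt_one.trans_le hb
    rw [schemeMuExponent_add_schemeBeta_of_two_le b β0 βinf le_rfl, ← sub_nonneg,
      one_sub_schemeMuExponent_one_add_schemeBeta_one hb_pos.ne']
    exact div_nonneg (mul_nonneg (sub_nonneg.2 hb) hcond) (by positivity)
  | k + 2 =>
    rw [schemeMuExponent_add_schemeBeta_of_two_le b β0 βinf (by lia),
      schemeMuExponent_add_schemeBeta_of_two_le b β0 βinf (by lia)]

end SchemeExponents

theorem statement7_general {b β0 βinf lam : ℝ} (hb : 1 ≤ b) (hβ0 : β0 ≤ βinf)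
    (hcond : 0 ≤ 1 + β0 - (b + 2) * βinf) (hlam : 1 ≤ lam) {β μ η : ℕ → ℝ}
    (hβ : ∀ j, β j = β0 / b ^ j + (1 - 1 / b ^ j) * βinf)
    (hμ : ∀ j, μ j = if 2 ≤ j then lam ^ (1 - β j)
        else lam ^ ((1 - β0) * (b + 1) / (2 * b) + (b - 1) * βinf / 2))
    (hη : ∀ j, η j = lam ^ (b * β0 - (b - 1) * βinf - β j)) :
    Antitone fun j => η j / μ j := by
  obtain rfl : β = schemeBeta b β0 βinf := funext hβ
  have hμ_rpow (j : ℕ) : μ j = lam ^ schemeMuExponent b β0 βinf j := by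
    rw [hμ, schemeMuExponent, apply_ite (lam ^ ·)]
  have hratio (j : ℕ) : η j / μ j = lam ^ (b * β0 - (b - 1) * βinf -
      (schemeMuExponent b β0 βinf j + schemeBeta b β0 βinf j)) := by
    rw [hη, hμ_rpow, ← Real.rpow_sub (zero_lt_one.trans_le hlam), sub_sub, add_comm]
  simp only [hratio]
  exact (Real.monotone_rpow_of_base_ge_one hlam).comp_antitone fun _ _ hij =>
    sub_le_sub_left (monotone_schemeMuExponent_add_schemeBeta hb hβ0 hcond hij) _

theorem statement7 (b β0 βinf lam : ℝ) (hb : 1 < b) (h0 : 0 < β0) (h1 : β0 < βinf)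
    (hinf : βinf < 1/3) (hcond : 1 + β0 - (b + 2) * βinf ≥ 0) (hlam : 1 ≤ lam)
    (β μ η : ℕ → ℝ)
    (hβ : ∀ j, β j = β0 / b ^ j + (1 - 1 / b ^ j) * βinf)
    (hμ : ∀ j, μ j = if 2 ≤ j then lam ^ (1 - β j)
        else lam ^ ((1 - β0) * (b + 1) / (2 * b) + (b - 1) * βinf / 2))
    (hη : ∀ j, η j = lam ^ (b * β0 - (b - 1) * βinf - β j)) :
    ∀ j j', j ≤ j' → η j' / μ j' ≤ η j / μ j :=
  fun _ _ hj => statement7_general hb.le h1.le hcond hlam hβ hμ hη hj
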